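/- arXiv:0705.1286 — 4 statements merged into one kernel-verified Lean document; each statement's English description precedes it below -/
import Mathlib

section
/- Let R be an integral domain and I an ideal of R[X] such that I ∩ R is a maximal ideal of R. Then I is power stable. -/
open Polynomial

/-- An ideal `I` of `R[X]` is power stable if for all `t ≥ 1`,
`I^t ∩ R = (I ∩ R)^t`, intersections with `R` meaning contraction along `C : R →+* R[X]`. -/
def IsPowerStable {R : Type*} [CommRing R] (I : Ideal R[X]) : Prop :=
  ∀ t : ℕ, 1 ≤ t →
    (I ^ t).comap (C : R →+* R[X]) = (I.comap (C : R →+* R[X])) ^ t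

/-!
Put `M = I ∩ R`. As `R ⧸ M` is a field, either `I = M R[X]` or `I = M R[X] + (f)` with `f` monic;
in the second case `f` is not a unit because `I` is proper, and in the first case `I` is contained
in `M R[X] + (f)` for `f = X`. Thus `I` extends into `M S`, where `S = R[X] ⧸ (f)`, and hence
`I ^ t` extends into `M ^ t S`. Since `S` is a nonzero free `R`-module, it is faithfully flat, so
that `M ^ t S ∩ R = M ^ t`.
-/

theorem comap_algebraMap_pow_le_pow_of_map_le {R A S : Type*} [CommRing R] [CommSemiring A]
    [CommRing S] [Algebra R A] [Algebra R S] [Module.FaithfullyFlat R S] (φ : A →ₐ[R] S)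
    {I : Ideal A} {M : Ideal R} (hIM : I.map φ ≤ M.map (algebraMap R S)) (t : ℕ) :
    (I ^ t).comap (algebraMap R A) ≤ M ^ t := by
  intro r hr
  have hmem : algebraMap R S r ∈ (M ^ t).map (algebraMap R S) := by
    have hpow : (I ^ t).map φ ≤ (M ^ t).map (algebraMap R S) := by
      simpa only [Ideal.map_pow] using Ideal.pow_right_mono hIM t
    rw [← φ.commutes r]
    exact hpow (Ideal.mem_map_of_mem φ hr)
  rwa [← Ideal.mem_comap, Ideal.comap_map_eq_self_of_faithfullyFlat] at hmem

section

variable {R : Type*} [CommRing R]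

theorem faithfullyFlat_adjoinRoot_of_monic {f : R[X]} (hf : f.Monic) (hunit : ¬IsUnit f) :
    Module.FaithfullyFlat R (AdjoinRoot f) := by
  have : Module.Free R (AdjoinRoot f) := hf.free_adjoinRoot
  have : Nontrivial (AdjoinRoot f) := Ideal.Quotient.nontrivial_iff.mpr (by simpa)
  infer_instance

theorem comap_C_pow_le_pow_of_le_map_C_sup_span {I : Ideal R[X]} {M : Ideal R} {f : R[X]}
    (hf : f.Monic) (hunit : ¬IsUnit f) (hI : I ≤ M.map C ⊔ Ideal.span {f}) (t : ℕ) :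
    (I ^ t).comap C ≤ M ^ t := by
  have : Module.FaithfullyFlat R (AdjoinRoot f) := faithfullyFlat_adjoinRoot_of_monic hf hunit
  refine comap_algebraMap_pow_le_pow_of_map_le (AdjoinRoot.mkₐ f) ?_ t
  refine Ideal.map_le_iff_le_comap.mpr (hI.trans (sup_le ?_ ?_))
  · refine Ideal.map_le_iff_le_comap.mpr fun r hr ↦ ?_
    exact Ideal.mem_map_of_mem (algebraMap R (AdjoinRoot f)) hr
  · rw [Ideal.span_singleton_le_iff_mem, Ideal.mem_comap]
    simp

theorem exists_monic_not_isUnit_le_map_C_sup_span {I : Ideal R[X]} (hmax : (I.comap C).IsMaximal) :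
    ∃ f : R[X], f.Monic ∧ ¬IsUnit f ∧ I ≤ (I.comap C).map C ⊔ Ideal.span {f} := by
  have hI : I ≠ ⊤ := mt Ideal.comap_eq_top_iff.mpr hmax.ne_top
  by_cases hext : I = (I.comap C).map C
  · have : Nontrivial R := (Submodule.nontrivial_iff R).mp (nontrivial_of_ne _ _ hmax.ne_top)
    exact ⟨X, monic_X, not_isUnit_X, hext.le.trans le_sup_left⟩
  · obtain ⟨f, hf, hIf⟩ := exists_monic_span_sup_map_eq R I hmax hext
    have hfI : f ∈ I := by
      rw [hIf]
      exact Ideal.mem_sup_right (Ideal.mem_span_singleton_self f)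
    exact ⟨f, hf, fun hunit ↦ hI (I.eq_top_of_isUnit_mem hfI hunit), hIf.le⟩

theorem stmt_7_general (I : Ideal R[X]) (hmax : (I.comap (C : R →+* R[X])).IsMaximal) :
    IsPowerStable I := by
  intro t _
  obtain ⟨f, hf, hunit, hI⟩ := exists_monic_not_isUnit_le_map_C_sup_span hmax
  exact le_antisymm (comap_C_pow_le_pow_of_le_map_C_sup_span hf hunit hI t)
    (Ideal.le_comap_pow C t)

end

theorem stmt_7 {R : Type*} [CommRing R] [IsDomain R] (I : Ideal R[X])
    (hmax : (I.comap (C : R →+* R[X])).IsMaximal) : IsPowerStable I :=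
  stmt_7_general I hmax
end

section
/- Let R be an integral domain and M a maximal ideal of R[X], and set P = M ∩ R. Then M is power stable if and only if for every t ≥ 1 the ideal P^t is P-primary (i.e. P^t is a primary ideal with radical equal to P). -/
open Polynomial

/-!
Put `P = I ∩ R`. If `I ^ t` is primary, so is its contraction, which is `P ^ t` when `I` is power
stable. Conversely, suppose `I` is not contained in `P[X]` and let `f` be a polynomial of least
degree in `I` outside `P[X]`. Its leading coefficient `c` is not in `P`, and pseudo-division by `f`
shows that `I` lies in `P[X] + (f)` up to powers of `c`. Hence `I ^ t` lies in `(P ^ t)[X] + (f)` up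
to powers of `c`. When `P ^ t` is `P`-primary, `c` is regular modulo `P ^ t`, so on constants both
`f` and the power of `c` can be dropped.
-/

section Ideals

variable {A : Type*} [CommRing A]

theorem sup_pow_le_pow_sup (I J : Ideal A) (t : ℕ) : (I ⊔ J) ^ t ≤ I ^ t ⊔ J := by
  induction t with
  | zero => simp only [pow_zero, le_sup_left]
  | succ t ih =>
    calc (I ⊔ J) ^ (t + 1) ≤ (I ^ t ⊔ J) * (I ⊔ J) := by
          rw [pow_succ]
          exact Ideal.mul_mono_left ih
      _ = I ^ (t + 1) ⊔ J * I ⊔ (I ^ t ⊔ J) * J := by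
          rw [Ideal.mul_sup, Ideal.sup_mul, pow_succ]
      _ ≤ I ^ (t + 1) ⊔ J :=
          sup_le (sup_le_sup_left Ideal.mul_le_left _) (le_sup_of_le_right Ideal.mul_le_right)

theorem exists_mul_mem_pow_of_forall_exists_mul_mem {S : Submonoid A} {I J : Ideal A}
    (h : ∀ x ∈ I, ∃ s ∈ S, s * x ∈ J) {t : ℕ} {x : A} (hx : x ∈ I ^ t) :
    ∃ s ∈ S, s * x ∈ J ^ t := by
  let φ := algebraMap A (Localization S)
  have map_le_map : I.map φ ≤ J.map φ := Ideal.map_le_iff_le_comap.2 fun y hy ↦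
    (IsLocalization.algebraMap_mem_map_algebraMap_iff S _ J y).2 (h y hy)
  refine (IsLocalization.algebraMap_mem_map_algebraMap_iff S (Localization S) _ x).1 ?_
  rw [Ideal.map_pow]
  refine Ideal.pow_right_mono map_le_map t ?_
  rw [← Ideal.map_pow]
  exact Ideal.mem_map_of_mem φ hx

theorem mk_mem_nonZeroDivisors_of_isPrimary {Q : Ideal A} (hQ : Q.IsPrimary) {a : A}
    (ha : a ∉ Q.radical) : Ideal.Quotient.mk Q a ∈ nonZeroDivisors (A ⧸ Q) := by
  rw [mem_nonZeroDivisors_iff_right]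
  intro y hy
  obtain ⟨b, rfl⟩ := Ideal.Quotient.mk_surjective y
  rw [← map_mul, Ideal.Quotient.eq_zero_iff_mem] at hy
  exact Ideal.Quotient.eq_zero_iff_mem.2 (((Ideal.isPrimary_iff.1 hQ).2 hy).resolve_right ha)

theorem isPrimary_pow_of_isMaximal {M : Ideal A} (hM : M.IsMaximal)
    {t : ℕ} (ht : t ≠ 0) : (M ^ t).IsPrimary := by
  apply Ideal.isPrimary_of_isMaximal_radical
  rwa [Ideal.radical_pow _ ht, hM.isPrime.radical]

end Ideals

section Polynomials

variable {R : Type*} [CommRing R]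

theorem eq_zero_of_dvd_C {f : R[X]} (hf : f.leadingCoeff ∈ nonZeroDivisors R)
    (hdeg : 0 < f.natDegree) {a : R} (h : f ∣ C a) : a = 0 := by
  obtain ⟨k, hk⟩ := h
  suffices k = 0 by rwa [this, mul_zero, C_eq_zero] at hk
  by_contra hk0
  have hlc : f.leadingCoeff * k.leadingCoeff ≠ 0 := fun h0 ↦
    hk0 (leadingCoeff_eq_zero.1 ((mem_nonZeroDivisors_iff.1 hf).1 _ h0))
  have hsum := natDegree_mul' hlc
  rw [← hk, natDegree_C] at hsum
  omega

theorem exists_dvd_C_leadingCoeff_pow_mul_sub (f : R[X]) (hf : 0 < f.natDegree) (g : R[X]) :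
    ∃ (n : ℕ) (r : R[X]), r.natDegree < f.natDegree ∧ f ∣ C (f.leadingCoeff ^ n) * g - r := by
  induction hd : g.natDegree using Nat.strong_induction_on generalizing g with
  | _ d ih =>
    rcases lt_or_ge g.natDegree f.natDegree with hlt | hle
    · exact ⟨0, g, hlt, by simp⟩
    · have hcancel : (f.cancelLeads g).natDegree < d :=
        hd ▸ natDegree_cancelLeads_lt_of_natDegree_le_natDegree hle (hf.trans_le hle)
      obtain ⟨n, r, hr, hdvd⟩ := ih _ hcancel _ rfl
      refine ⟨n + 1, r, hr, ?_⟩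
      convert hdvd.add (dvd_mul_left f (C (f.leadingCoeff ^ n) *
        (C g.leadingCoeff * X ^ (g.natDegree - f.natDegree)))) using 1
      simp only [cancelLeads, Nat.sub_eq_zero_of_le hle, pow_succ, map_mul]
      ring

theorem mem_map_C_sup_span_singleton_iff {Q : Ideal R} {f g : R[X]} :
    g ∈ Q.map C ⊔ Ideal.span {f} ↔
      f.map (Ideal.Quotient.mk Q) ∣ g.map (Ideal.Quotient.mk Q) := by
  let φ := mapRingHom (Ideal.Quotient.mk Q)
  have hφ : Function.Surjective φ := map_surjective _ Ideal.Quotient.mk_surjective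
  have hcomap : (Ideal.span {φ f}).comap φ = Q.map C ⊔ Ideal.span {f} := by
    rw [← Set.image_singleton, ← Ideal.map_span, Ideal.comap_map_of_surjective' _ hφ,
      ker_mapRingHom, Ideal.mk_ker, sup_comm]
  rw [← hcomap, Ideal.mem_comap, Ideal.mem_span_singleton, coe_mapRingHom]

theorem mem_of_C_mem_map_C_sup_span_singleton {Q : Ideal R} {f : R[X]}
    (hf : Ideal.Quotient.mk Q f.leadingCoeff ∈ nonZeroDivisors (R ⧸ Q))
    (hdeg : 0 < f.natDegree) {a : R} (h : C a ∈ Q.map C ⊔ Ideal.span {f}) : a ∈ Q := by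
  rw [← Ideal.Quotient.eq_zero_iff_mem]
  nontriviality R ⧸ Q
  have hlc := nonZeroDivisors.ne_zero hf
  apply eq_zero_of_dvd_C (f := f.map (Ideal.Quotient.mk Q))
  · rwa [leadingCoeff_map_of_leadingCoeff_ne_zero _ hlc]
  · rwa [natDegree_map_of_leadingCoeff_ne_zero _ hlc]
  · rwa [mem_map_C_sup_span_singleton_iff, map_C] at h

end Polynomials

section Contraction

variable {R : Type*} [CommRing R] {I : Ideal R[X]}

theorem exists_mem_natDegree_minimal_of_not_le_map_comap_C
    (hI : ¬I ≤ (I.comap C).map (C : R →+* R[X])) :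
    ∃ f ∈ I, f.leadingCoeff ∉ I.comap C ∧ 0 < f.natDegree ∧
      ∀ g ∈ I, g.natDegree < f.natDegree → g ∈ (I.comap C).map (C : R →+* R[X]) := by
  obtain ⟨f, ⟨hfI, hf⟩, hmin⟩ := exists_minimalFor_of_wellFoundedLT
    (fun f ↦ f ∈ I ∧ f ∉ (I.comap C).map C) natDegree (SetLike.not_le_iff_exists.1 hI)
  have mem_of_lt : ∀ g ∈ I, g.natDegree < f.natDegree → g ∈ (I.comap C).map C :=
    fun g hg hlt ↦ by_contra fun hgP ↦ hlt.not_ge (hmin ⟨hg, hgP⟩ hlt.le)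
  have hdeg : 0 < f.natDegree := by
    by_contra! h0
    rw [eq_C_of_natDegree_le_zero h0] at hf hfI
    exact hf (Ideal.mem_map_of_mem C hfI)
  refine ⟨f, hfI, fun hlc ↦ hf ?_, hdeg, mem_of_lt⟩
  have hlead : C f.leadingCoeff * X ^ f.natDegree ∈ (I.comap C).map C :=
    Ideal.mul_mem_right _ _ (Ideal.mem_map_of_mem C hlc)
  have herase : f.eraseLead ∈ I := by
    rw [← self_sub_C_mul_X_pow]
    exact I.sub_mem hfI (Ideal.map_comap_le hlead)
  rw [← eraseLead_add_C_mul_X_pow f]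
  exact Ideal.add_mem _ (mem_of_lt _ herase (by grind [eraseLead_natDegree_le])) hlead

theorem exists_C_leadingCoeff_pow_mul_mem_map_C_sup_span {P : Ideal R} {f : R[X]} (hfI : f ∈ I)
    (hdeg : 0 < f.natDegree) (hmin : ∀ g ∈ I, g.natDegree < f.natDegree → g ∈ P.map C)
    {g : R[X]} (hg : g ∈ I) :
    ∃ n : ℕ, C (f.leadingCoeff ^ n) * g ∈ P.map C ⊔ Ideal.span {f} := by
  obtain ⟨n, r, hr, hdvd⟩ := exists_dvd_C_leadingCoeff_pow_mul_sub f hdeg g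
  have hrI : r ∈ I := by
    rw [← sub_sub_cancel (C (f.leadingCoeff ^ n) * g) r]
    exact I.sub_mem (I.mul_mem_left _ hg) (I.mem_of_dvd hdvd hfI)
  refine ⟨n, ?_⟩
  rw [← add_sub_cancel r (C (f.leadingCoeff ^ n) * g)]
  exact Submodule.add_mem_sup (hmin r hrI hr) (Ideal.mem_span_singleton.2 hdvd)

theorem exists_C_leadingCoeff_pow_mul_mem_map_C_pow_sup_span {P : Ideal R} {f : R[X]}
    (hfI : f ∈ I) (hdeg : 0 < f.natDegree)
    (hmin : ∀ g ∈ I, g.natDegree < f.natDegree → g ∈ P.map C) {t : ℕ} {g : R[X]}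
    (hg : g ∈ I ^ t) :
    ∃ n : ℕ, C (f.leadingCoeff ^ n) * g ∈ (P ^ t).map C ⊔ Ideal.span {f} := by
  have hbase : ∀ g ∈ I, ∃ s ∈ (Submonoid.powers f.leadingCoeff).map C,
      s * g ∈ P.map C ⊔ Ideal.span {f} := fun g hg ↦
    have ⟨n, hn⟩ := exists_C_leadingCoeff_pow_mul_mem_map_C_sup_span hfI hdeg hmin hg
    ⟨_, Submonoid.mem_map_of_mem C ⟨n, rfl⟩, hn⟩
  obtain ⟨_, ⟨_, ⟨n, rfl⟩, rfl⟩, hn⟩ := exists_mul_mem_pow_of_forall_exists_mul_mem hbase hg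
  refine ⟨n, ?_⟩
  rw [Ideal.map_pow]
  exact sup_pow_le_pow_sup _ _ t hn

theorem comap_C_pow_le_of_isPrimary {t : ℕ} (hprim : (I.comap C ^ t).IsPrimary)
    (hrad : (I.comap C ^ t).radical = I.comap C) :
    (I ^ t).comap (C : R →+* R[X]) ≤ I.comap C ^ t := by
  intro a ha
  by_cases hI : I ≤ (I.comap C).map C
  · have hmem : C a ∈ (I.comap C ^ t).map C := by
      rw [Ideal.map_pow]
      exact Ideal.pow_right_mono hI t ha
    simpa only [coeff_C_zero] using Ideal.mem_map_C_iff.1 hmem 0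
  · obtain ⟨f, hfI, hlc, hdeg, hmin⟩ := exists_mem_natDegree_minimal_of_not_le_map_comap_C hI
    have hreg : Ideal.Quotient.mk _ f.leadingCoeff ∈ nonZeroDivisors (R ⧸ I.comap C ^ t) :=
      mk_mem_nonZeroDivisors_of_isPrimary hprim (hrad.symm ▸ hlc)
    obtain ⟨n, hn⟩ := exists_C_leadingCoeff_pow_mul_mem_map_C_pow_sup_span hfI hdeg hmin ha
    rw [← map_mul] at hn
    have hmul : f.leadingCoeff ^ n * a ∈ I.comap C ^ t :=
      mem_of_C_mem_map_C_sup_span_singleton hreg hdeg hn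
    rw [← Ideal.Quotient.eq_zero_iff_mem, map_mul, map_pow] at hmul
    exact Ideal.Quotient.eq_zero_iff_mem.1 ((mem_nonZeroDivisors_iff.1 (pow_mem hreg n)).1 _ hmul)

end Contraction

theorem stmt_8_general {R : Type*} [CommRing R] (I : Ideal R[X])
    (hI : ∀ t : ℕ, 1 ≤ t → (I ^ t).IsPrimary) (P : Ideal R) (hPrad : P.IsRadical)
    (hP : P = I.comap (C : R →+* R[X])) :
    IsPowerStable I ↔
      ∀ t : ℕ, 1 ≤ t → (P ^ t).IsPrimary ∧ (P ^ t).radical = P := by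
  subst hP
  constructor
  · intro hstable t ht
    refine ⟨?_, by rw [Ideal.radical_pow _ (by omega), hPrad.radical]⟩
    rw [← hstable t ht]
    exact (hI t ht).comap C
  · intro hprimary t ht
    exact (comap_C_pow_le_of_isPrimary (hprimary t ht).1 (hprimary t ht).2).antisymm
      (Ideal.le_comap_pow C t)

theorem stmt_8 {R : Type*} [CommRing R] [IsDomain R] (M : Ideal R[X])
    (hM : M.IsMaximal) (P : Ideal R) (hP : P = M.comap (C : R →+* R[X])) :
    IsPowerStable M ↔
      ∀ t : ℕ, 1 ≤ t → (P ^ t).IsPrimary ∧ (P ^ t).radical = P := by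
  exact stmt_8_general M (fun t ht ↦ isPrimary_pow_of_isMaximal hM (by omega)) P
    (hP ▸ (hM.isPrime.comap C).isRadical) hP
end

section
/- Let R be a Noetherian integral domain of Krull dimension 1. Then every radical ideal of R[X] is power stable. -/
open Polynomial

/-!
Let `J = I ∩ R`. If `J = 0`, then `I ^ t ∩ R ⊆ J = 0`. Otherwise every prime over `J` is maximal.
Localizing at such a prime `m` turns the radical ideal `J` into `m`, so `J ^ t` is the intersection
of the powers `m ^ t`, and it suffices to bound `I ^ t ∩ R` by each of them. Some prime `M ⊇ I` of
`R[X]` lies over `m`, and either `M = m R[X]` or `M = m R[X] + (f)` with `f` monic. In both cases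
`R[X]` has a quotient `S` (`R[X]` or `R[X] / (f)`), free over `R`, in which `M` and `m` generate
the same ideal; hence `I ^ t ∩ R ⊆ m ^ t S ∩ R = m ^ t` by faithful flatness.
-/

theorem pow_eq_iInf_minimalPrimes_pow {R : Type*} [CommRing R] {J : Ideal R} (hJ : J.IsRadical)
    (hmax : ∀ p ∈ J.minimalPrimes, p.IsMaximal) (t : ℕ) :
    J ^ t = ⨅ p ∈ J.minimalPrimes, p ^ t := by
  refine le_antisymm (le_iInf₂ fun p hp ↦ Ideal.pow_right_mono hp.le t)
    (Ideal.le_of_localization_maximal fun m _ ↦ ?_)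
  by_cases hJm : J ≤ m
  · obtain ⟨p, hp, hpm⟩ := Ideal.exists_minimalPrimes_le hJm
    obtain rfl : p = m := (hmax p hp).eq_of_le (Ideal.IsPrime.ne_top inferInstance) hpm
    have map_eq : J.map (algebraMap R (Localization.AtPrime p)) = p.map (algebraMap R _) := by
      rw [← IsLocalization.AtPrime.radical_map_of_mem_minimalPrimes _ p J hp,
        ← IsLocalization.map_radical p.primeCompl, hJ.radical]
    rw [Ideal.map_pow, map_eq, ← Ideal.map_pow]
    exact Ideal.map_mono (iInf₂_le p hp)
  · rw [Ideal.map_pow, IsLocalization.AtPrime.map_eq_top_of_not_le _ hJm, Ideal.top_pow]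
    exact le_top

theorem comap_pow_le_of_map_le_of_faithfullyFlat {R A S : Type*} [CommRing R] [CommRing A]
    [CommRing S] [Algebra R A] [Algebra R S] [Module.FaithfullyFlat R S] (φ : A →ₐ[R] S)
    {m : Ideal R} {M : Ideal A} (hM : M.map φ ≤ m.map (algebraMap R S)) (t : ℕ) :
    (M ^ t).comap (algebraMap R A) ≤ m ^ t := by
  intro c hc
  rw [← (m ^ t).comap_map_eq_self_of_faithfullyFlat (B := S), Ideal.mem_comap, Ideal.map_pow,
    ← φ.commutes]
  exact Ideal.pow_right_mono hM t (Ideal.map_pow φ M t ▸ Ideal.mem_map_of_mem φ hc)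

section Contraction

variable {R : Type*} [CommRing R]

theorem comap_C_pow_map_C_sup_span_le {f : R[X]} (hf : f.Monic) (hunit : ¬IsUnit f) (m : Ideal R)
    (t : ℕ) : ((m.map C ⊔ Ideal.span {f}) ^ t).comap (C : R →+* R[X]) ≤ m ^ t := by
  have : Nontrivial (AdjoinRoot f) :=
    Ideal.Quotient.nontrivial_iff.mpr (mt Ideal.span_singleton_eq_top.mp hunit)
  have : Nontrivial R := (algebraMap R (AdjoinRoot f)).domain_nontrivial
  have : Module.Free R (AdjoinRoot f) := hf.free_adjoinRoot
  refine comap_pow_le_of_map_le_of_faithfullyFlat (AdjoinRoot.mkₐ f) ?_ t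
  have map_span : (Ideal.span {f}).map (AdjoinRoot.mkₐ f) = ⊥ := by
    simp [Ideal.map_span]
  rw [Ideal.map_sup, map_span, sup_bot_eq]
  exact (Ideal.map_map _ _).le

theorem comap_C_pow_eq_of_isMaximal_comap_C (M : Ideal R[X])
    (hmax : (M.comap (C : R →+* R[X])).IsMaximal) (t : ℕ) :
    (M ^ t).comap (C : R →+* R[X]) = (M.comap (C : R →+* R[X])) ^ t := by
  refine le_antisymm ?_ (Ideal.le_comap_pow _ t)
  by_cases hM : M = (M.comap C).map C
  · have : Nontrivial R := (Submodule.nontrivial_iff R).mp ⟨_, ⊤, hmax.ne_top⟩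
    exact comap_pow_le_of_map_le_of_faithfullyFlat (AlgHom.id R R[X])
      ((Ideal.map_id M).trans_le hM.le) t
  · obtain ⟨f, hf, hMf⟩ := exists_monic_span_sup_map_eq R M hmax hM
    have hfM : f ∈ M := by
      rw [hMf]
      exact Ideal.mem_sup_right (Ideal.mem_span_singleton_self f)
    have hunit : ¬IsUnit f := fun hu ↦
      hmax.ne_top (Ideal.comap_eq_top_iff.mpr (M.eq_top_of_isUnit_mem hfM hu))
    have contraction_le := comap_C_pow_map_C_sup_span_le hf hunit (M.comap C) t
    rwa [← hMf] at contraction_le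

theorem isPowerStable_of_minimalPrimes_isMaximal {I : Ideal R[X]} (hI : I.IsRadical)
    (hmax : ∀ p ∈ (I.comap (C : R →+* R[X])).minimalPrimes, p.IsMaximal) :
    IsPowerStable I := by
  intro t _
  refine le_antisymm ?_ (Ideal.le_comap_pow _ t)
  rw [pow_eq_iInf_minimalPrimes_pow (hI.comap C) hmax]
  refine le_iInf₂ fun p hp ↦ ?_
  obtain ⟨M, -, hIM, rfl⟩ := Ideal.exists_comap_eq_of_mem_minimalPrimes C p hp
  rw [← comap_C_pow_eq_of_isMaximal_comap_C M (hmax _ hp)]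
  exact Ideal.comap_mono (Ideal.pow_right_mono hIM t)

theorem isPowerStable_of_comap_C_eq_bot {I : Ideal R[X]} (hI : I.comap (C : R →+* R[X]) = ⊥) :
    IsPowerStable I := by
  intro t ht
  refine le_antisymm ?_ (Ideal.le_comap_pow _ t)
  exact (Ideal.comap_mono (Ideal.pow_le_self (by lia))).trans (hI.trans_le bot_le)

end Contraction

theorem stmt_13_general {R : Type*} [CommRing R] [Ring.DimensionLEOne R] (I : Ideal R[X])
    (hrad : I.IsRadical) : IsPowerStable I := by
  by_cases hbot : I.comap (C : R →+* R[X]) = ⊥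
  · exact isPowerStable_of_comap_C_eq_bot hbot
  · exact isPowerStable_of_minimalPrimes_isMaximal hrad fun p hp ↦
      hp.isPrime.isMaximal (ne_bot_of_le_ne_bot hbot hp.le)

theorem stmt_13 {R : Type*} [CommRing R] [IsDomain R] [IsNoetherianRing R]
    (hdim : ringKrullDim R = 1) (I : Ideal R[X]) (hrad : I.IsRadical) :
    IsPowerStable I := by
  have : Ring.KrullDimLE 1 R := Ring.krullDimLE_iff.mpr hdim.le
  have : Ring.DimensionLEOne R := ⟨fun hp hp' ↦ hp'.isMaximal_of_ne_bot hp⟩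
  exact stmt_13_general I hrad
end

section
/- Let R be an integral domain. Every principal ideal of R[X] is power stable. -/
open Polynomial

theorem comap_C_map_C {R : Type*} [CommSemiring R] (I : Ideal R) :
    (I.map (C : R →+* R[X])).comap C = I := by
  refine le_antisymm (fun r hr ↦ ?_) Ideal.le_comap_map
  simpa only [coeff_C_zero] using Ideal.mem_map_C_iff.mp (Ideal.mem_comap.mp hr) 0

theorem comap_C_span_singleton_eq_bot {R : Type*} [CommSemiring R] [NoZeroDivisors R] {f : R[X]}
    (hf : f.natDegree ≠ 0) : (Ideal.span {f}).comap (C : R →+* R[X]) = ⊥ := by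
  refine (Submodule.eq_bot_iff _).mpr fun r hr ↦ ?_
  have hdvd : f ∣ C r := Ideal.mem_span_singleton.mp (Ideal.mem_comap.mp hr)
  by_contra hr0
  have hdeg : f.natDegree ≤ (C r).natDegree := natDegree_le_of_dvd hdvd (C_ne_zero.mpr hr0)
  exact hf (Nat.le_zero.mp (hdeg.trans_eq (natDegree_C r)))

namespace IsPowerStable

variable {R : Type*} [CommRing R]

theorem map_C (I : Ideal R) : IsPowerStable (I.map C) := by
  intro t _
  rw [← Ideal.map_pow, comap_C_map_C, comap_C_map_C]

theorem of_comap_eq_bot {I : Ideal R[X]} (hI : I.comap C = ⊥) : IsPowerStable I := by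
  intro t ht
  have ht0 : t ≠ 0 := Nat.one_le_iff_ne_zero.mp ht
  have hpow : (I ^ t).comap C = ⊥ :=
    le_bot_iff.mp ((Ideal.comap_mono (Ideal.pow_le_self ht0)).trans_eq hI)
  rw [hpow, hI, Ideal.bot_pow ht0]

end IsPowerStable

theorem stmt_15 {R : Type*} [CommRing R] [IsDomain R] (f : R[X]) :
    IsPowerStable (Ideal.span {f}) := by
  by_cases hf : f.natDegree = 0
  · obtain ⟨a, rfl⟩ := natDegree_eq_zero.mp hf
    rw [← Set.image_singleton, ← Ideal.map_span]
    exact IsPowerStable.map_C _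
  · exact IsPowerStable.of_comap_eq_bot (comap_C_span_singleton_eq_bot hf)
end
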